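/- arXiv:2302.01077 — 3 statements merged into one kernel-verified Lean document; each statement's English description precedes it below -/
import Mathlib

section
/- Let X, Y ∈ G_∞(H) be subspaces such that X ∩ Y has codimension 2 in both X and Y, and let Z, Z' ∈ G_∞(H) be ortho-adjacent to each other and such that each of Z, Z' is ortho-adjacent to both X and Y. Then Z ∩ Z' is contained in X or Z ∩ Z' is contained in Y. -/
open Module Submodule Classical

variable {H : Type*} [NormedAddCommGroup H] [InnerProductSpace ℂ H] [CompleteSpace H]

/-- The orthogonal projection of `H` onto a closed subspace `K`, as a map `H →L[ℂ] H`
(defined to be `0` if `K` is not closed). -/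
noncomputable def projCLM (K : Submodule ℂ H) : H →L[ℂ] H :=
  if h : IsClosed (K : Set H) then
    haveI : CompleteSpace K := h.completeSpace_coe
    K.subtypeL.comp (orthogonalProjection K)
  else 0

/-- Two (closed) subspaces are compatible if their orthogonal projections commute. -/
def Compatible (K L : Submodule ℂ H) : Prop := Commute (projCLM K) (projCLM L)

/-- `W` is a subspace of `X` of finite codimension `n` in `X`. -/
def CodimIn (W X : Submodule ℂ H) (n : ℕ) : Prop :=
  W ≤ X ∧ FiniteDimensional ℂ (↥X ⧸ W.comap X.subtype) ∧
    finrank ℂ (↥X ⧸ W.comap X.subtype) = n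

/-- `X` and `Y` are adjacent: `X ∩ Y` is a hyperplane in both `X` and `Y`. -/
def Adjacent (X Y : Submodule ℂ H) : Prop :=
  CodimIn (X ⊓ Y) X 1 ∧ CodimIn (X ⊓ Y) Y 1

/-- `X` and `Y` are ortho-adjacent: adjacent and compatible. -/
def OrthoAdjacent (X Y : Submodule ℂ H) : Prop := Adjacent X Y ∧ Compatible X Y

/-- The Grassmannian `G_∞(H)` of closed subspaces of `H` whose dimension and
codimension both are infinite. -/
def Ginf : Set (Submodule ℂ H) :=
  {X | IsClosed (X : Set H) ∧ ¬FiniteDimensional ℂ X ∧ ¬FiniteDimensional ℂ Xᗮ}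

/-- `X ∩ Y` has the same finite codimension in both `X` and `Y`. -/
def SameFinCodim (X Y : Submodule ℂ H) : Prop :=
  ∃ n : ℕ, CodimIn (X ⊓ Y) X n ∧ CodimIn (X ⊓ Y) Y n

/-- An `A`-component of `G_∞(H)`: a set of elements pairwise at the same finite
codimension, maximal with respect to this property. -/
def IsAComponent (C : Set (Submodule ℂ H)) : Prop :=
  C ⊆ Ginf ∧ (∀ X ∈ C, ∀ Y ∈ C, SameFinCodim X Y) ∧
    ∀ D : Set (Submodule ℂ H), D ⊆ Ginf → (∀ X ∈ D, ∀ Y ∈ D, SameFinCodim X Y) →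
      C ⊆ D → D = C

/-- The star `S(X)`: all closed subspaces of `H` containing `X` as a hyperplane. -/
def starSet (X : Submodule ℂ H) : Set (Submodule ℂ H) :=
  {Y | IsClosed (Y : Set H) ∧ CodimIn X Y 1}

/-- The top `G¹(X)`: all closed hyperplanes of `X`. -/
def topSet (X : Submodule ℂ H) : Set (Submodule ℂ H) :=
  {M | IsClosed (M : Set H) ∧ CodimIn M X 1}

/-- The image `U(M)` of a subspace `M ⊆ X` under a linear isometry `U : X ≃ X'`,
viewed as a subspace of `H`. -/
def imL (X X' : Submodule ℂ H) (U : ↥X ≃ₗᵢ[ℂ] ↥X') (M : Submodule ℂ H) : Submodule ℂ H :=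
  Submodule.map X'.subtype (Submodule.map U.toLinearEquiv.toLinearMap (M.comap X.subtype))

/-- The image `U(M)` of a subspace `M ⊆ X` under a conjugate-linear isometry `U : X ≃ X'`,
viewed as a subspace of `H`. -/
def imC (X X' : Submodule ℂ H) (U : ↥X ≃ₗᵢ⋆[ℂ] ↥X') (M : Submodule ℂ H) : Submodule ℂ H :=
  Submodule.map X'.subtype (Submodule.map U.toLinearEquiv.toLinearMap (M.comap X.subtype))

/-- The Grassmannian `G_k(H)` of `k`-dimensional subspaces of `H`. -/
def Gk (k : ℕ) : Set (Submodule ℂ H) :=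
  {X | FiniteDimensional ℂ X ∧ finrank ℂ X = k}

/-- The Grassmannian `G^k(H)` of closed subspaces of `H` of codimension `k`. -/
def GCk (k : ℕ) : Set (Submodule ℂ H) :=
  {X | IsClosed (X : Set H) ∧ FiniteDimensional ℂ (H ⧸ X) ∧ finrank ℂ (H ⧸ X) = k}


/-!
In the modular lattice of subspaces, adjacency of `X` and `Y` says that `X ⊓ Y` is covered by both.
If `Z ⊓ X = Z' ⊓ X`, this common hyperplane of `Z` is contained in the hyperplane `Z ⊓ Z'`, so the
two are equal and `Z ⊓ Z' ≤ X`. Otherwise `Z ⊓ X` and `Z' ⊓ X` are distinct hyperplanes of `X`, so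
they span it and `X ≤ Z ⊔ Z'`. The same alternative holds for `Y`. But if both `X` and `Y` were
contained in `Z ⊔ Z'`, which covers `Z` and hence also `X`, then `X ⊓ Y` would have codimension at
most one in `Y`.
-/

section Lattice

variable {α : Type*} [Lattice α] {s x y z z' : α}

/-- Adjacency in a lattice: the meet of the two elements is covered by each of them. For the lattice
of subspaces this is `Adjacent`, see `adjacent_iff_latticeAdjacent`. -/
def LatticeAdjacent (x y : α) : Prop :=
  x ⊓ y ⋖ x ∧ x ⊓ y ⋖ y

namespace LatticeAdjacent

theorem covBy_sup_left [IsWeakUpperModularLattice α] (h : LatticeAdjacent x y) : x ⋖ x ⊔ y :=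
  h.1.sup_of_inf_of_inf_left h.2

theorem covBy_sup_right [IsWeakUpperModularLattice α] (h : LatticeAdjacent x y) : y ⋖ x ⊔ y :=
  h.1.sup_of_inf_of_inf_right h.2

theorem covBy_of_covBy_of_le [IsWeakUpperModularLattice α] (h : LatticeAdjacent z x)
    (hzs : z ⋖ s) (hxs : x ≤ s) : x ⋖ s := by
  have sup_eq : z ⊔ x = s :=
    (hzs.eq_or_eq le_sup_left (sup_le hzs.le hxs)).resolve_left h.covBy_sup_left.ne'
  exact sup_eq ▸ h.covBy_sup_right

theorem inf_le_or_le_sup (hzz' : ¬z ≤ z') (hzx : LatticeAdjacent z x) (hz'x : z' ⊓ x ⋖ x) :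
    z ⊓ z' ≤ x ∨ x ≤ z ⊔ z' := by
  by_cases hinf : z ⊓ x = z' ⊓ x
  · have le_inf_inf : z ⊓ x ≤ z ⊓ z' := le_inf inf_le_left (hinf.trans_le inf_le_left)
    have inf_inf_eq : z ⊓ z' = z ⊓ x :=
      (hzx.1.eq_or_eq le_inf_inf inf_le_left).resolve_right (mt inf_eq_left.1 hzz')
    exact .inl (inf_inf_eq.trans_le inf_le_right)
  · have sup_eq : z ⊓ x ⊔ z' ⊓ x = x := hzx.2.wcovBy.sup_eq hz'x.wcovBy hinf
    exact .inr (sup_eq.ge.trans (sup_le_sup inf_le_left inf_le_left))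

end LatticeAdjacent

theorem inf_wcovBy_of_covBy_of_le [IsLowerModularLattice α] (hxs : x ⋖ s) (hys : y ≤ s) :
    x ⊓ y ⩿ y := by
  rcases hxs.eq_or_eq le_sup_left (sup_le hxs.le hys) with hsup | hsup
  · exact (inf_eq_right.2 (sup_eq_left.1 hsup)).wcovBy
  · exact (inf_covBy_of_covBy_sup_left (hsup ▸ hxs)).wcovBy

theorem stmt5_general [IsModularLattice α] (hxy : ¬x ⊓ y ⩿ y) (hzz' : LatticeAdjacent z z')
    (hzx : LatticeAdjacent z x) (hzy : LatticeAdjacent z y)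
    (hz'x : LatticeAdjacent z' x) (hz'y : LatticeAdjacent z' y) :
    z ⊓ z' ≤ x ∨ z ⊓ z' ≤ y := by
  have not_le : ¬z ≤ z' := inf_lt_left.1 hzz'.1.lt
  rcases hzx.inf_le_or_le_sup not_le hz'x.2 with inf_le_x | x_le_sup
  · exact .inl inf_le_x
  rcases hzy.inf_le_or_le_sup not_le hz'y.2 with inf_le_y | y_le_sup
  · exact .inr inf_le_y
  have x_covBy_sup : x ⋖ z ⊔ z' := hzx.covBy_of_covBy_of_le hzz'.covBy_sup_left x_le_sup
  exact absurd (inf_wcovBy_of_covBy_of_le x_covBy_sup y_le_sup) hxy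

end Lattice

section Codimension

variable {E : Type*} [NormedAddCommGroup E] [InnerProductSpace ℂ E] {W X Y : Submodule ℂ E} {n : ℕ}

theorem codimIn_one_iff_covBy : CodimIn W X 1 ↔ W ⋖ X := by
  constructor
  · rintro ⟨hWX, -, hrank⟩
    exact (covBy_iff_quot_is_simple hWX).2 (isSimpleModule_iff_finrank_eq_one.2 hrank)
  · intro hcov
    have hrank := isSimpleModule_iff_finrank_eq_one.1 ((covBy_iff_quot_is_simple hcov.le).1 hcov)
    exact ⟨hcov.le, .of_finrank_pos (hrank ▸ one_pos), hrank⟩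

theorem adjacent_iff_latticeAdjacent : Adjacent X Y ↔ LatticeAdjacent X Y :=
  and_congr codimIn_one_iff_covBy codimIn_one_iff_covBy

theorem codimIn_self_iff : CodimIn X X n ↔ n = 0 := by
  have : Subsingleton (X ⧸ X.comap X.subtype) :=
    Submodule.Quotient.subsingleton_iff.2 (comap_subtype_self X)
  simp [CodimIn, finrank_zero_of_subsingleton, eq_comm, Module.Finite.of_finite]

theorem CodimIn.not_wcovBy (h : CodimIn W X n) (hn : 1 < n) : ¬W ⩿ X := by
  intro hWX
  rcases wcovBy_iff_covBy_or_eq.1 hWX with hcov | rfl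
  · exact hn.ne ((codimIn_one_iff_covBy.2 hcov).2.2.symm.trans h.2.2)
  · exact hn.not_gt ((codimIn_self_iff.1 h).trans_lt one_pos)

end Codimension

/-- if `X ∩ Y` has codimension 2 in both `X, Y ∈ G_∞(H)` and `Z, Z' ∈ G_∞(H)`
are ortho-adjacent to each other and each is ortho-adjacent to both `X` and `Y`, then
`Z ∩ Z' ⊆ X` or `Z ∩ Z' ⊆ Y`. -/
theorem stmt5 (hH : ¬FiniteDimensional ℂ H) (X Y Z Z' : Submodule ℂ H)
    (hX : X ∈ Ginf (H := H)) (hY : Y ∈ Ginf (H := H))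
    (hZ : Z ∈ Ginf (H := H)) (hZ' : Z' ∈ Ginf (H := H))
    (h2X : CodimIn (X ⊓ Y) X 2) (h2Y : CodimIn (X ⊓ Y) Y 2)
    (hZZ' : OrthoAdjacent Z Z')
    (hZX : OrthoAdjacent Z X) (hZY : OrthoAdjacent Z Y)
    (hZ'X : OrthoAdjacent Z' X) (hZ'Y : OrthoAdjacent Z' Y) :
    Z ⊓ Z' ≤ X ∨ Z ⊓ Z' ≤ Y := by
  simp only [OrthoAdjacent, adjacent_iff_latticeAdjacent] at hZZ' hZX hZY hZ'X hZ'Y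
  exact stmt5_general (h2Y.not_wcovBy one_lt_two) hZZ'.1 hZX.1 hZY.1 hZ'X.1 hZ'Y.1
end

section
/- Let X, Y ∈ G_∞(H) be adjacent and let P, Q be orthogonal one-dimensional subspaces of (X + Y)^⊥. Then P ⊕ (X ∩ Y) and Q ⊕ (X ∩ Y) are elements of G_∞(H) which are ortho-adjacent to each other and each of them is ortho-adjacent to both X and Y. -/
open Module Submodule Classical

variable {H : Type*} [NormedAddCommGroup H] [InnerProductSpace ℂ H] [CompleteSpace H]

/-!
Put `W = X ∩ Y`, a closed hyperplane of `X` and of `Y`. The class `G_∞(H)` is stable under passing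
to closed subspaces of finite codimension and under adding finite-dimensional subspaces, so it
contains `W`, and with it `P + W` and `Q + W`. Each of the five ortho-adjacencies is an instance of
one fact: if `W` is a closed hyperplane of a closed subspace `L` and the line `P` is orthogonal to
`L`, then `P + W` is ortho-adjacent to `L`. Indeed `(P + W) ∩ L = W`, and the projection onto
`P + W` is the sum of the projections onto `P` and `W`, both of which commute with the one onto `L`.
-/

section OrthogonalProjection

variable {𝕜 E : Type*} [RCLike 𝕜] [NormedAddCommGroup E] [InnerProductSpace 𝕜 E]
  {U V W L : Submodule 𝕜 E}

theorem isClosed_of_hasOrthogonalProjection [U.HasOrthogonalProjection] :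
    IsClosed (U : Set E) :=
  U.orthogonal_orthogonal ▸ Uᗮ.isClosed_orthogonal

theorem starProjection_add_starProjection_mem_sup [U.HasOrthogonalProjection]
    [V.HasOrthogonalProjection] (x : E) :
    U.starProjection x + V.starProjection x ∈ U ⊔ V :=
  add_mem_sup (starProjection_apply_mem U x) (starProjection_apply_mem V x)

theorem sub_starProjection_add_starProjection_mem_orthogonal_sup [U.HasOrthogonalProjection]
    [V.HasOrthogonalProjection] (hUV : U ⟂ V) (x : E) :
    x - (U.starProjection x + V.starProjection x) ∈ (U ⊔ V)ᗮ := by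
  rw [← inf_orthogonal]
  constructor
  · rw [← sub_sub]
    exact sub_mem (sub_starProjection_mem_orthogonal x) (hUV.symm (starProjection_apply_mem V x))
  · rw [add_comm, ← sub_sub]
    exact sub_mem (sub_starProjection_mem_orthogonal x) (hUV (starProjection_apply_mem U x))

theorem hasOrthogonalProjection_sup_of_isOrtho [U.HasOrthogonalProjection]
    [V.HasOrthogonalProjection] (hUV : U ⟂ V) : (U ⊔ V).HasOrthogonalProjection where
  exists_orthogonal x := ⟨_, starProjection_add_starProjection_mem_sup x,
    sub_starProjection_add_starProjection_mem_orthogonal_sup hUV x⟩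

theorem starProjection_sup_of_isOrtho [U.HasOrthogonalProjection] [V.HasOrthogonalProjection]
    [(U ⊔ V).HasOrthogonalProjection] (hUV : U ⟂ V) :
    (U ⊔ V).starProjection = U.starProjection + V.starProjection := by
  ext x
  exact eq_starProjection_of_mem_orthogonal (starProjection_add_starProjection_mem_sup x)
    (sub_starProjection_add_starProjection_mem_orthogonal_sup hUV x)

theorem commute_starProjection_of_isOrtho [U.HasOrthogonalProjection]
    [V.HasOrthogonalProjection] (hUV : U ⟂ V) : Commute U.starProjection V.starProjection :=
  hUV.starProjection_comp_starProjection.trans hUV.symm.starProjection_comp_starProjection.symm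

theorem commute_starProjection_of_le [U.HasOrthogonalProjection] [V.HasOrthogonalProjection]
    (hUV : U ≤ V) : Commute U.starProjection V.starProjection := by
  have comp_eq : V.starProjection ∘L U.starProjection = U.starProjection := by
    ext x
    exact starProjection_eq_self_iff.2 (hUV (starProjection_apply_mem U x))
  exact (starProjection_comp_starProjection_of_le hUV).trans comp_eq.symm

theorem commute_starProjection_sup_of_isOrtho_of_le [U.HasOrthogonalProjection]
    [W.HasOrthogonalProjection] [L.HasOrthogonalProjection] [(U ⊔ W).HasOrthogonalProjection]
    (hUL : U ⟂ L) (hWL : W ≤ L) :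
    Commute (U ⊔ W).starProjection L.starProjection := by
  rw [starProjection_sup_of_isOrtho (hUL.mono_right hWL)]
  exact (commute_starProjection_of_isOrtho hUL).add_left (commute_starProjection_of_le hWL)

theorem finiteDimensional_of_orthogonal_inf [FiniteDimensional 𝕜 U]
    [FiniteDimensional 𝕜 ↥(Uᗮ ⊓ V)] : FiniteDimensional 𝕜 V := by
  have inf_ker_fg : (V ⊓ U.orthogonalProjectionOnto.ker).FG := by
    rw [ker_orthogonalProjectionOnto, inf_comm]
    exact Finite.iff_fg.1 inferInstance
  exact Finite.iff_fg.2 (fg_of_fg_map_of_fg_inf_ker _ (IsNoetherian.noetherian _) inf_ker_fg)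

end OrthogonalProjection

section Codimension

variable {E : Type*} [NormedAddCommGroup E] [InnerProductSpace ℂ E] {P W X L : Submodule ℂ E}

theorem codimIn_sup_of_disjoint [FiniteDimensional ℂ P] (hPW : Disjoint P W) :
    CodimIn W (P ⊔ W) (finrank ℂ P) := by
  have comap_eq_bot : (P ⊓ W).comap P.subtype = ⊥ := by
    rw [hPW.eq_bot, comap_bot, ker_subtype]
  let e : P ≃ₗ[ℂ] ↥(P ⊔ W) ⧸ W.comap (P ⊔ W).subtype :=
    (quotEquivOfEqBot _ comap_eq_bot).symm.trans (LinearMap.quotientInfEquivSupQuotient P W)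
  exact ⟨le_sup_right, e.finiteDimensional, e.finrank_eq.symm⟩

theorem CodimIn.finiteDimensional {n : ℕ} (hWX : CodimIn W X n) [FiniteDimensional ℂ W] :
    FiniteDimensional ℂ X := by
  obtain ⟨hle, hquot, -⟩ := hWX
  have : FiniteDimensional ℂ (W.comap X.subtype) :=
    (comapSubtypeEquivOfLe hle).symm.finiteDimensional
  exact Finite.of_submodule_quotient (W.comap X.subtype)

theorem adjacent_sup_of_disjoint (hP : finrank ℂ P = 1) (hPL : Disjoint P L)
    (hWL : CodimIn W L 1) : Adjacent (P ⊔ W) L := by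
  have : FiniteDimensional ℂ P := finite_of_finrank_eq_succ hP
  have inf_eq : (P ⊔ W) ⊓ L = W := by
    rw [sup_comm, sup_inf_assoc_of_le P hWL.1, hPL.eq_bot, sup_bot_eq]
  rw [Adjacent, inf_eq]
  exact ⟨hP ▸ codimIn_sup_of_disjoint (hPL.mono_right hWL.1), hWL⟩

end Codimension

section Ginf

variable {E : Type*} [NormedAddCommGroup E] [InnerProductSpace ℂ E] {W X : Submodule ℂ E}

theorem CodimIn.mem_Ginf {n : ℕ} (hWX : CodimIn W X n) (hX : X ∈ Ginf)
    (hW : IsClosed (W : Set E)) : W ∈ Ginf :=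
  ⟨hW, fun _ ↦ hX.2.1 hWX.finiteDimensional,
    fun _ ↦ hX.2.2 (finiteDimensional_of_le (orthogonal_le hWX.1))⟩

theorem sup_mem_Ginf (P : Submodule ℂ E) [FiniteDimensional ℂ P] (hW : W ∈ Ginf) :
    P ⊔ W ∈ Ginf := by
  refine ⟨?_, fun _ ↦ hW.2.1 (finiteDimensional_of_le (le_sup_right : W ≤ P ⊔ W)), fun hfin ↦ ?_⟩
  · rw [sup_comm]
    exact isClosed_sup_finiteDimensional W P hW.1
  · rw [← inf_orthogonal] at hfin
    exact hW.2.2 (finiteDimensional_of_orthogonal_inf (U := P))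

end Ginf

section Compatible

variable {P W L : Submodule ℂ H}

theorem projCLM_eq_starProjection (L : Submodule ℂ H) [L.HasOrthogonalProjection] :
    projCLM L = L.starProjection :=
  dif_pos isClosed_of_hasOrthogonalProjection

theorem compatible_sup_of_isOrtho_of_le [P.HasOrthogonalProjection] [W.HasOrthogonalProjection]
    [L.HasOrthogonalProjection] (hPL : P ⟂ L) (hWL : W ≤ L) : Compatible (P ⊔ W) L := by
  have := hasOrthogonalProjection_sup_of_isOrtho (hPL.mono_right hWL)
  rw [Compatible, projCLM_eq_starProjection, projCLM_eq_starProjection]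
  exact commute_starProjection_sup_of_isOrtho_of_le hPL hWL

theorem orthoAdjacent_sup (hW : IsClosed (W : Set H)) (hL : IsClosed (L : Set H))
    (hP : finrank ℂ P = 1) (hPL : P ⟂ L) (hWL : CodimIn W L 1) : OrthoAdjacent (P ⊔ W) L := by
  have : FiniteDimensional ℂ P := finite_of_finrank_eq_succ hP
  have := hW.completeSpace_coe
  have := hL.completeSpace_coe
  exact ⟨adjacent_sup_of_disjoint hP hPL.disjoint hWL,
    compatible_sup_of_isOrtho_of_le hPL hWL.1⟩

end Compatible

/-- for adjacent `X, Y ∈ G_∞(H)` and orthogonal one-dimensional subspaces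
`P, Q ⊆ (X + Y)^⊥`, the subspaces `P ⊕ (X ∩ Y)` and `Q ⊕ (X ∩ Y)` belong to `G_∞(H)`, are
ortho-adjacent to each other, and each is ortho-adjacent to both `X` and `Y`. -/
theorem stmt7 (hH : ¬FiniteDimensional ℂ H) (X Y P Q : Submodule ℂ H)
    (hX : X ∈ Ginf (H := H)) (hY : Y ∈ Ginf (H := H)) (hadj : Adjacent X Y)
    (hP : P ≤ (X ⊔ Y)ᗮ) (hQ : Q ≤ (X ⊔ Y)ᗮ)
    (hPdim : finrank ℂ P = 1) (hQdim : finrank ℂ Q = 1)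
    (hPQ : P ≤ Qᗮ) :
    P ⊔ (X ⊓ Y) ∈ Ginf (H := H) ∧ Q ⊔ (X ⊓ Y) ∈ Ginf (H := H) ∧
    OrthoAdjacent (P ⊔ (X ⊓ Y)) (Q ⊔ (X ⊓ Y)) ∧
    OrthoAdjacent (P ⊔ (X ⊓ Y)) X ∧ OrthoAdjacent (P ⊔ (X ⊓ Y)) Y ∧
    OrthoAdjacent (Q ⊔ (X ⊓ Y)) X ∧ OrthoAdjacent (Q ⊔ (X ⊓ Y)) Y := by
  obtain ⟨hPX, hPY⟩ := isOrtho_sup_right.1 hP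
  obtain ⟨hQX, hQY⟩ := isOrtho_sup_right.1 hQ
  have : FiniteDimensional ℂ P := finite_of_finrank_eq_succ hPdim
  have : FiniteDimensional ℂ Q := finite_of_finrank_eq_succ hQdim
  obtain ⟨hWX, hWY⟩ := hadj
  have hW : X ⊓ Y ∈ Ginf := hWX.mem_Ginf hX (hX.1.inter hY.1)
  have hPW : P ⊔ X ⊓ Y ∈ Ginf := sup_mem_Ginf P hW
  have hQW : Q ⊔ X ⊓ Y ∈ Ginf := sup_mem_Ginf Q hW
  have hPQW : P ⟂ Q ⊔ X ⊓ Y := isOrtho_sup_right.2 ⟨hPQ, hPX.mono_right hWX.1⟩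
  have hWQ : CodimIn (X ⊓ Y) (Q ⊔ X ⊓ Y) 1 :=
    hQdim ▸ codimIn_sup_of_disjoint (hQX.mono_right hWX.1).disjoint
  exact ⟨hPW, hQW, orthoAdjacent_sup hW.1 hQW.1 hPdim hPQW hWQ,
    orthoAdjacent_sup hW.1 hX.1 hPdim hPX hWX, orthoAdjacent_sup hW.1 hY.1 hPdim hPY hWY,
    orthoAdjacent_sup hW.1 hX.1 hQdim hQX hWX, orthoAdjacent_sup hW.1 hY.1 hQdim hQY hWY⟩
end

section
/- Let f be a bijective transformation of G_∞(H) which preserves the ortho-adjacency relation in both directions, and let X, X' ∈ G_∞(H) be such that f maps the top G^1(X) onto the top G^1(X'). Then there exists a unitary or anti-unitary operator U_X : X → X' (a surjective linear or conjugate-linear isometry from X onto X') such that f(M) = U_X(M) for every M ∈ G^1(X). -/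
open Module Submodule Classical

variable {H : Type*} [NormedAddCommGroup H] [InnerProductSpace ℂ H] [CompleteSpace H]

/-!
The closed hyperplanes of a closed subspace `X` are the orthogonal complements in `X` of its lines,
and two such hyperplanes are ortho-adjacent exactly when the lines are orthogonal. So `f` induces a
bijection between the lines of `X` and those of `X'` that preserves orthogonality in both
directions. As `span {a, b}` is a double orthogonal complement, this bijection is a collineation,
and the fundamental theorem of projective geometry produces a `σ`-semilinear map `U` inducing it.
If `x ⟂ y` and `‖x‖ = ‖y‖`, then `x + a • y ⟂ -conj a • x + y`; applying `U` shows that `σ` commutes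
with conjugation, so `σ` fixes the reals and is the identity or conjugation. Finally, a semilinear
map preserving orthogonality scales all norms by the same factor, and `U` can be normalised to an
isometry.
-/

section FundamentalTheorem

variable {K L V W : Type*} [DivisionRing K] [DivisionRing L] [AddCommGroup V] [Module K V]
  [AddCommGroup W] [Module L W]

theorem exists_notMem_span_pair (hV : 3 ≤ Module.rank K V) (a b : V) :
    ∃ w, w ∉ span K ({a, b} : Set V) := by
  by_contra! h
  have hrank : Module.rank K (span K ({a, b} : Set V)) ≤ 2 :=
    (rank_span_le _).trans (Cardinal.mk_insert_le.trans (by norm_num))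
  rw [eq_top_iff'.2 h, rank_top] at hrank
  exact absurd (hV.trans hrank) (by norm_num)

/-- A map `g` whose values, taken up to nonzero scalars, embed the projective space of `V` into that
of `W` so that collinearity is preserved and reflected. A map of points is encoded by a choice of
representing vectors, with `0` sent to `0`. -/
structure IsProjectiveEmbedding (K L : Type*) {V W : Type*} [DivisionRing K] [DivisionRing L]
    [AddCommGroup V] [Module K V] [AddCommGroup W] [Module L W] (g : V → W) : Prop where
  map_zero : g 0 = 0
  mem_span_pair_iff : ∀ x a b, g x ∈ span L {g a, g b} ↔ x ∈ span K {a, b}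

namespace IsProjectiveEmbedding

variable {g : V → W}

theorem mem_span_singleton_iff (hg : IsProjectiveEmbedding K L g) (x a : V) :
    g x ∈ L ∙ g a ↔ x ∈ K ∙ a := by
  simpa only [Set.pair_eq_singleton] using hg.mem_span_pair_iff x a a

theorem map_ne_zero (hg : IsProjectiveEmbedding K L g) {x : V} (hx : x ≠ 0) : g x ≠ 0 := by
  intro h
  have hmem : x ∈ K ∙ (0 : V) := (hg.mem_span_singleton_iff x 0).1 (h ▸ zero_mem _)
  exact hx (by simpa using hmem)

theorem span_map_eq_span_map (hg : IsProjectiveEmbedding K L g) {x y : V} (h : K ∙ x = K ∙ y) :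
    L ∙ g x = L ∙ g y := by
  apply le_antisymm <;> rw [span_singleton_le_iff_mem, hg.mem_span_singleton_iff]
  exacts [h ▸ mem_span_singleton_self x, h ▸ mem_span_singleton_self y]

/-- `T` is `g` read in the affine charts `y ↦ [e + y]` and `w ↦ [g e + w]`, normalised so that it
also agrees with `g` on the hyperplane `ker φ` at infinity. -/
structure IsChartMap (g : V → W) (φ : V →ₗ[K] K) (e : V) (T : LinearMap.ker φ → W) : Prop where
  span_eq : ∀ y : LinearMap.ker φ, L ∙ T y = L ∙ g y
  span_add_eq : ∀ y : LinearMap.ker φ, L ∙ (g e + T y) = L ∙ g (e + y)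

variable {φ : V →ₗ[K] K} {e : V}

theorem exists_isChartMap (hg : IsProjectiveEmbedding K L g) (he : φ e = 1) :
    ∃ T, IsChartMap (L := L) g φ e T := by
  suffices h : ∀ y : LinearMap.ker φ, ∃ t, L ∙ t = L ∙ g y ∧ L ∙ (g e + t) = L ∙ g (e + y) by
    choose T hT using h
    exact ⟨T, fun y ↦ (hT y).1, fun y ↦ (hT y).2⟩
  intro ⟨y, hy⟩
  rw [LinearMap.mem_ker] at hy
  obtain ⟨a, b, hab⟩ : ∃ a b : L, a • g e + b • g y = g (e + y) :=
    mem_span_pair.1 ((hg.mem_span_pair_iff _ _ _).2 (mem_span_pair.2 ⟨1, 1, by simp⟩))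
  have ha : a ≠ 0 := by
    rintro rfl
    obtain ⟨c, hc⟩ := mem_span_singleton.1 <| (hg.mem_span_singleton_iff (e + y) y).1 <|
      mem_span_singleton.2 ⟨b, by simpa using hab⟩
    simpa [hy, he] using congrArg φ hc
  by_cases hy0 : y = 0
  · exact ⟨0, by simp [hy0, hg.map_zero]⟩
  have hb : b ≠ 0 := by
    rintro rfl
    obtain ⟨c, hc⟩ := mem_span_singleton.1 <| (hg.mem_span_singleton_iff (e + y) e).1 <|
      mem_span_singleton.2 ⟨a, by simpa using hab⟩
    have hc1 : c = 1 := by simpa [hy, he] using congrArg φ hc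
    exact hy0 (by simpa [hc1] using hc)
  refine ⟨(a⁻¹ * b) • g y, span_singleton_smul_eq (mul_ne_zero (inv_ne_zero ha) hb).isUnit _, ?_⟩
  rw [← hab, ← span_singleton_smul_eq ha.isUnit (g e + _), smul_add, smul_smul,
    mul_inv_cancel_left₀ ha]

namespace IsChartMap

variable {T : LinearMap.ker φ → W}

theorem span_pair_eq (hT : IsChartMap (L := L) g φ e T) (y z : LinearMap.ker φ) :
    span L {T y, T z} = span L {g y, g z} := by
  simp only [span_insert, hT.span_eq]

theorem isProjectiveEmbedding (hT : IsChartMap (L := L) g φ e T)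
    (hg : IsProjectiveEmbedding K L g) : IsProjectiveEmbedding K L T where
  map_zero := by simpa [hg.map_zero] using hT.span_eq 0
  mem_span_pair_iff x a b := by
    rw [← span_singleton_le_iff_mem, hT.span_eq, hT.span_pair_eq, span_singleton_le_iff_mem,
      hg.mem_span_pair_iff]
    simp only [mem_span_pair, Subtype.ext_iff, coe_add, coe_smul]

theorem map_add_sub_mem (hT : IsChartMap (L := L) g φ e T) (hg : IsProjectiveEmbedding K L g)
    (he : φ e = 1) (y z : LinearMap.ker φ) : T (y + z) - T y ∈ L ∙ T z := by
  have hTg := hT.isProjectiveEmbedding hg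
  have hspan : span L {g (e + y), g z} = span L {g e + T y, T z} := by
    simp only [span_insert, hT.span_eq, hT.span_add_eq]
  have hmem : g e + T (y + z) ∈ span L {g e + T y, T z} := by
    rw [← span_singleton_le_iff_mem, hT.span_add_eq, span_singleton_le_iff_mem, ← hspan,
      hg.mem_span_pair_iff]
    exact mem_span_pair.2 ⟨1, 1, by simp [add_assoc]⟩
  obtain ⟨a, b, hab⟩ := mem_span_pair.1 hmem
  have hplane : (1 - a) • g e ∈ span L {T y, T z} := by
    have hsum : T (y + z) ∈ span L {T y, T z} :=
      (hTg.mem_span_pair_iff _ _ _).2 (mem_span_pair.2 ⟨1, 1, by simp⟩)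
    have heq : (1 - a) • g e = a • T y + b • T z - T (y + z) := by
      rw [sub_smul, one_smul, sub_eq_sub_iff_add_eq_add, ← hab, smul_add]
      abel
    rw [heq]
    exact sub_mem (mem_span_pair.2 ⟨a, b, rfl⟩) hsum
  have hge : g e ∉ span L {T y, T z} := by
    rw [hT.span_pair_eq, hg.mem_span_pair_iff, mem_span_pair]
    rintro ⟨c, d, hcd⟩
    simpa [he] using congrArg φ hcd
  have ha : a = 1 := by
    by_contra hne
    exact hge ((smul_mem_iff _ (sub_ne_zero.2 (Ne.symm hne))).1 hplane)
  refine mem_span_singleton.2 ⟨b, ?_⟩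
  rw [ha, one_smul, add_assoc] at hab
  rw [eq_sub_iff_add_eq', add_left_cancel hab]

theorem map_add_of_notMem (hT : IsChartMap (L := L) g φ e T) (hg : IsProjectiveEmbedding K L g)
    (he : φ e = 1) {y z : LinearMap.ker φ} (hyz : z ∉ K ∙ y) : T (y + z) = T y + T z := by
  obtain ⟨b, hb⟩ := mem_span_singleton.1 (hT.map_add_sub_mem hg he y z)
  obtain ⟨c, hc⟩ := mem_span_singleton.1 (hT.map_add_sub_mem hg he z y)
  rw [add_comm z y] at hc
  have hmem : (1 - b) • T z ∈ L ∙ T y := by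
    refine mem_span_singleton.2 ⟨1 - c, ?_⟩
    rw [sub_smul, sub_smul, one_smul, one_smul, hb, hc]
    abel
  have hb1 : 1 - b = 0 := by
    by_contra hne
    exact hyz (((hT.isProjectiveEmbedding hg).mem_span_singleton_iff z y).1
      ((smul_mem_iff _ hne).1 hmem))
  rw [← sub_eq_iff_eq_add', ← hb, ← sub_eq_zero.1 hb1, one_smul]

/-- For parallel `y` and `z`, both sides are compared after adding a vector off their line. -/
theorem map_add (hT : IsChartMap (L := L) g φ e T) (hg : IsProjectiveEmbedding K L g)
    (he : φ e = 1) (hφ : ∀ y : LinearMap.ker φ, ∃ w, w ∉ K ∙ y) (y z : LinearMap.ker φ) :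
    T (y + z) = T y + T z := by
  by_cases hyz : z ∈ K ∙ y
  · obtain ⟨w, hw⟩ := hφ y
    have hzw : z + w ∉ K ∙ y := fun h ↦ hw ((Submodule.add_mem_iff_right _ hyz).1 h)
    have hwz : w ∉ K ∙ z := fun h ↦ hw ((span_singleton_le_iff_mem _ _).2 hyz h)
    have hwyz : w ∉ K ∙ (y + z) := fun h ↦
      hw ((span_singleton_le_iff_mem _ _).2 (add_mem (mem_span_singleton_self y) hyz) h)
    have hsum : T (y + z) + T w = T y + T z + T w := calc
      T (y + z) + T w = T (y + (z + w)) := by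
        rw [← hT.map_add_of_notMem hg he hwyz, add_assoc]
      _ = T y + T z + T w := by
        rw [hT.map_add_of_notMem hg he hzw, hT.map_add_of_notMem hg he hwz, add_assoc]
    exact add_right_cancel hsum
  · exact hT.map_add_of_notMem hg he hyz

end IsChartMap

theorem map_smul_eq_smul_of_notMem {T : V →+ W} (hT : IsProjectiveEmbedding K L T) {s : K} {t : L}
    {y z : V} (hy : y ≠ 0) (hyz : z ∉ K ∙ y) (hty : T (s • y) = t • T y) :
    T (s • z) = t • T z := by
  have hsmul (x : V) : ∃ r : L, r • T x = T (s • x) :=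
    mem_span_singleton.1 ((hT.mem_span_singleton_iff _ _).2 (mem_span_singleton.2 ⟨s, rfl⟩))
  obtain ⟨t', ht'⟩ := hsmul z
  obtain ⟨r, hr⟩ := hsmul (y + z)
  have hcomb : (t' - r) • T z = (r - t) • T y := by
    rw [smul_add, AddMonoidHom.map_add, AddMonoidHom.map_add, smul_add, hty, ← ht'] at hr
    rw [sub_smul, sub_smul, sub_eq_sub_iff_add_eq_add, add_comm, ← hr, add_comm]
  have ht'r : t' - r = 0 := by
    by_contra hne
    exact hyz ((hT.mem_span_singleton_iff z y).1
      ((smul_mem_iff _ hne).1 (mem_span_singleton.2 ⟨_, hcomb.symm⟩)))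
  have hrt : r - t = 0 := by
    rw [ht'r, zero_smul, eq_comm, smul_eq_zero] at hcomb
    exact hcomb.resolve_right (hT.map_ne_zero hy)
  rw [← ht', sub_eq_zero.1 ht'r, sub_eq_zero.1 hrt]

theorem exists_forall_map_smul_eq {T : V →+ W} (hT : IsProjectiveEmbedding K L T)
    (hV : ∀ y : V, ∃ w, w ∉ K ∙ y) (s : K) : ∃ t : L, ∀ y, T (s • y) = t • T y := by
  obtain ⟨y, hy⟩ := hV 0
  have hy0 : y ≠ 0 := by simpa using hy
  obtain ⟨t, ht⟩ := mem_span_singleton.1 ((hT.mem_span_singleton_iff (s • y) y).2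
    (mem_span_singleton.2 ⟨s, rfl⟩))
  refine ⟨t, fun z ↦ ?_⟩
  by_cases hz : z ∈ K ∙ y
  · by_cases hz0 : z = 0
    · simp [hz0]
    obtain ⟨w, hw⟩ := hV y
    have hw0 : w ≠ 0 := by
      rintro rfl
      exact hw (zero_mem _)
    have hzw : z ∉ K ∙ w := by
      intro h
      obtain ⟨c, rfl⟩ := mem_span_singleton.1 h
      exact hw ((smul_mem_iff _ (left_ne_zero_of_smul hz0)).1 hz)
    exact hT.map_smul_eq_smul_of_notMem hw0 hzw (hT.map_smul_eq_smul_of_notMem hy0 hw ht.symm)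
  · exact hT.map_smul_eq_smul_of_notMem hy0 hz ht.symm

theorem exists_ringHom_map_smul {T : V →+ W} (hT : IsProjectiveEmbedding K L T)
    (hV : ∀ y : V, ∃ w, w ∉ K ∙ y) : ∃ σ : K →+* L, ∀ s y, T (s • y) = σ s • T y := by
  choose σ hσ using hT.exists_forall_map_smul_eq hV
  obtain ⟨y, hy⟩ := hV 0
  have hTy : T y ≠ 0 := hT.map_ne_zero (by simpa using hy)
  have hinj {a b : L} (h : a • T y = b • T y) : a = b := smul_left_injective L hTy h
  exact ⟨{ toFun := σ
           map_one' := hinj (by rw [← hσ, one_smul, one_smul])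
           map_zero' := hinj (by rw [← hσ, zero_smul, zero_smul, _root_.map_zero])
           map_add' := fun a b ↦ hinj (by rw [← hσ, add_smul, add_smul, map_add, hσ, hσ])
           map_mul' := fun a b ↦ hinj (by rw [← hσ, mul_smul, mul_smul, hσ, hσ]) }, hσ⟩

theorem IsChartMap.exists_semilinearMap {T : LinearMap.ker φ → W}
    (hT : IsChartMap (L := L) g φ e T) (hg : IsProjectiveEmbedding K L g) (he : φ e = 1)
    (hφ : ∀ y : LinearMap.ker φ, ∃ w, w ∉ K ∙ y) :
    ∃ (σ : K →+* L) (S : LinearMap.ker φ →ₛₗ[σ] W), ⇑S = T := by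
  let S : LinearMap.ker φ →+ W := AddMonoidHom.mk' T (hT.map_add hg he hφ)
  obtain ⟨σ, hσ⟩ := exists_ringHom_map_smul (T := S) (hT.isProjectiveEmbedding hg) hφ
  exact ⟨σ, { S with map_smul' := hσ }, rfl⟩

theorem IsChartMap.span_smul_add_eq {σ : K →+* L} {T : LinearMap.ker φ →ₛₗ[σ] W}
    (hT : IsChartMap (L := L) g φ e T) (hg : IsProjectiveEmbedding K L g)
    (a : K) (y : LinearMap.ker φ) : L ∙ (σ a • g e + T y) = L ∙ g (a • e + y) := by
  by_cases ha : a = 0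
  · simpa [ha] using hT.span_eq y
  have hσa : IsUnit (σ a) := ((_root_.map_ne_zero σ).2 ha).isUnit
  calc L ∙ (σ a • g e + T y) = L ∙ (σ a • (g e + T (a⁻¹ • y))) := by
        rw [smul_add, ← map_smulₛₗ, smul_inv_smul₀ ha]
    _ = L ∙ g (e + ↑(a⁻¹ • y)) := by rw [span_singleton_smul_eq hσa, hT.span_add_eq]
    _ = L ∙ g (a • e + y) := hg.span_map_eq_span_map <| by
        rw [← span_singleton_smul_eq (Ne.isUnit ha) (e + _), smul_add, coe_smul,
          smul_inv_smul₀ ha]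

/-- The **fundamental theorem of projective geometry**. -/
theorem exists_semilinearMap (hg : IsProjectiveEmbedding K L g) (hV : 3 ≤ Module.rank K V) :
    ∃ (σ : K →+* L) (U : V →ₛₗ[σ] W), ∀ x, L ∙ U x = L ∙ g x := by
  obtain ⟨v, hv⟩ := exists_notMem_span_pair hV 0 0
  obtain ⟨φ, hφv⟩ := Projective.exists_dual_ne_zero K (x := v) (by simpa using hv)
  let e := (φ v)⁻¹ • v
  have he : φ e = 1 := by simp [e, hφv]
  let π : V →ₗ[K] LinearMap.ker φ :=
    (LinearMap.id - φ.smulRight e).codRestrict _ (fun x ↦ by simp [he])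
  have hπ (x : V) : φ x • e + π x = x := add_sub_cancel (φ x • e) x
  have hφ (y : LinearMap.ker φ) : ∃ w, w ∉ K ∙ y := by
    obtain ⟨w, hw⟩ := exists_notMem_span_pair hV e y
    refine ⟨π w, fun h ↦ hw ?_⟩
    obtain ⟨c, hc⟩ := mem_span_singleton.1 h
    exact mem_span_pair.2 ⟨φ w, c, by rw [← coe_smul, hc, hπ]⟩
  obtain ⟨T, hT⟩ := hg.exists_isChartMap he
  obtain ⟨σ, T, rfl⟩ := hT.exists_semilinearMap hg he hφ
  let U : V →ₛₗ[σ] W :=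
    (LinearMap.toSpanSingleton L W (g e)).comp (σ.toSemilinearMap.comp φ) + T.comp π
  refine ⟨σ, U, fun x ↦ ?_⟩
  calc L ∙ U x = L ∙ g (φ x • e + π x) := hT.span_smul_add_eq hg (φ x) (π x)
    _ = L ∙ g x := by rw [hπ]

end IsProjectiveEmbedding

theorem surjective_of_forall_exists_span_eq {σ : K →+* L} [RingHomSurjective σ] {U : V →ₛₗ[σ] W}
    (hU : ∀ w, ∃ x, L ∙ U x = L ∙ w) : Function.Surjective U := by
  intro w
  obtain ⟨x, hx⟩ := hU w
  obtain ⟨c, hc⟩ := mem_span_singleton.1 (hx ▸ mem_span_singleton_self w)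
  obtain ⟨a, ha⟩ := σ.surjective c
  exact ⟨a • x, by rw [map_smulₛₗ, ha, hc]⟩

end FundamentalTheorem

section Uhlhorn

open scoped InnerProductSpace

variable {𝕜 E F : Type*} [RCLike 𝕜] [NormedAddCommGroup E] [InnerProductSpace 𝕜 E]
  [NormedAddCommGroup F] [InnerProductSpace 𝕜 F]

theorem ringHom_map_ofReal_of_map_conj {σ : 𝕜 →+* 𝕜}
    (hσ : ∀ a, σ (starRingEnd 𝕜 a) = starRingEnd 𝕜 (σ a)) (r : ℝ) : σ r = r := by
  have hre (r : ℝ) : (RCLike.re (σ r) : 𝕜) = σ r := by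
    rw [← RCLike.conj_eq_iff_re, ← hσ, RCLike.conj_ofReal]
  let ρ : ℝ →+* ℝ :=
    { toFun := fun r ↦ RCLike.re (σ r)
      map_one' := by simp
      map_zero' := by simp
      map_add' := by simp
      map_mul' := fun a b ↦ RCLike.ofReal_injective (K := 𝕜) <| by
        rw [hre, RCLike.ofReal_mul, RCLike.ofReal_mul, hre, hre, map_mul] }
  have hρ : ρ r = r := congrArg (· r) (Subsingleton.elim ρ (RingHom.id ℝ))
  rw [← hre]
  exact congrArg _ hρ

theorem ringHom_eq_id_or_conj_of_map_conj {σ : 𝕜 →+* 𝕜}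
    (hσ : ∀ a, σ (starRingEnd 𝕜 a) = starRingEnd 𝕜 (σ a)) :
    σ = RingHom.id 𝕜 ∨ σ = starRingEnd 𝕜 := by
  have hσ_eq (a : 𝕜) : σ a = RCLike.re a + RCLike.im a * σ RCLike.I := by
    conv_lhs => rw [← RCLike.re_add_im a, map_add, map_mul, ringHom_map_ofReal_of_map_conj hσ,
      ringHom_map_ofReal_of_map_conj hσ]
  have hI : σ RCLike.I = RCLike.I ∨ σ RCLike.I = -RCLike.I := by
    rcases RCLike.I_mul_I (K := 𝕜) with h | h
    · simp [h]
    · rw [← mul_self_eq_mul_self_iff, ← map_mul, h, map_neg, map_one]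
  refine hI.imp (fun h ↦ RingHom.ext fun a ↦ ?_) (fun h ↦ RingHom.ext fun a ↦ ?_)
  · rw [hσ_eq, h, RCLike.re_add_im, RingHom.id_apply]
  · rw [hσ_eq, h, RCLike.conj_eq_re_sub_im, mul_neg, sub_eq_add_neg]

theorem exists_orthonormal_of_le_rank {n : ℕ} (hn : n ≤ Module.rank 𝕜 E) :
    ∃ v : Fin n → E, Orthonormal 𝕜 v := by
  obtain ⟨v, hv⟩ := exists_linearIndependent_of_le_rank hn
  exact ⟨_, InnerProductSpace.gramSchmidtNormed_orthonormal hv⟩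

section SemilinearMap

variable {σ : 𝕜 →+* 𝕜} {U : E →ₛₗ[σ] F}

theorem map_conj_of_inner_map_eq_zero (hU : ∀ x y, ⟪x, y⟫_𝕜 = 0 → ⟪U x, U y⟫_𝕜 = 0) {x y : E}
    (hxy : ⟪x, y⟫_𝕜 = 0) (hnorm : ‖x‖ = ‖y‖) (hx : U x ≠ 0) (a : 𝕜) :
    σ (starRingEnd 𝕜 a) = starRingEnd 𝕜 (σ a) := by
  have horth (a : 𝕜) : starRingEnd 𝕜 (σ a) * ⟪U y, U y⟫_𝕜 = σ (starRingEnd 𝕜 a) * ⟪U x, U x⟫_𝕜 := by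
    have h0 : ⟪x + a • y, -starRingEnd 𝕜 a • x + y⟫_𝕜 = 0 := by
      simp [inner_add_left, inner_add_right, inner_smul_left, inner_smul_right, hxy,
        inner_eq_zero_symm.1 hxy, inner_self_eq_norm_sq_to_K, hnorm]
    have h1 := hU _ _ h0
    simp only [map_add, map_smulₛₗ, map_neg, inner_add_left, inner_add_right, inner_smul_left,
      inner_smul_right, hU _ _ hxy, hU _ _ (inner_eq_zero_symm.1 hxy)] at h1
    linear_combination h1
  have hself : ⟪U y, U y⟫_𝕜 = ⟪U x, U x⟫_𝕜 := by simpa using horth 1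
  exact (mul_right_cancel₀ (inner_self_ne_zero.2 hx) (hself ▸ horth a)).symm

variable [RingHomIsometric σ]

theorem norm_inner_map_mul_norm_sq (hU : ∀ x y, ⟪x, y⟫_𝕜 = 0 → ⟪U x, U y⟫_𝕜 = 0) (x y : E) :
    ‖⟪U x, U y⟫_𝕜‖ * ‖x‖ ^ 2 = ‖⟪x, y⟫_𝕜‖ * ‖U x‖ ^ 2 := by
  have h0 : ⟪x, ⟪x, x⟫_𝕜 • y - ⟪x, y⟫_𝕜 • x⟫_𝕜 = 0 := by
    rw [inner_sub_right, inner_smul_right, inner_smul_right, mul_comm, sub_self]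
  have h1 : σ ⟪x, x⟫_𝕜 * ⟪U x, U y⟫_𝕜 = σ ⟪x, y⟫_𝕜 * ⟪U x, U x⟫_𝕜 := by
    simpa [inner_sub_right, inner_smul_right, sub_eq_zero] using hU _ _ h0
  have h2 := congrArg norm h1
  simp only [norm_mul, RingHomIsometric.norm_map, inner_self_eq_norm_sq_to_K, norm_pow,
    RCLike.norm_ofReal, abs_norm] at h2
  rw [mul_comm, h2]

theorem norm_map_mul_norm_of_inner_ne_zero (hU : ∀ x y, ⟪x, y⟫_𝕜 = 0 → ⟪U x, U y⟫_𝕜 = 0) {x y : E}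
    (hxy : ⟪x, y⟫_𝕜 ≠ 0) : ‖U x‖ * ‖y‖ = ‖U y‖ * ‖x‖ := by
  have hx := norm_inner_map_mul_norm_sq hU x y
  have hy := norm_inner_map_mul_norm_sq hU y x
  rw [norm_inner_symm, norm_inner_symm y] at hy
  have hsq : ‖⟪x, y⟫_𝕜‖ * (‖U x‖ * ‖y‖) ^ 2 = ‖⟪x, y⟫_𝕜‖ * (‖U y‖ * ‖x‖) ^ 2 := by
    linear_combination ‖x‖ ^ 2 * hy - ‖y‖ ^ 2 * hx
  exact (pow_left_inj₀ (by positivity) (by positivity) two_ne_zero).1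
    (mul_left_cancel₀ (norm_ne_zero_iff.2 hxy) hsq)

theorem norm_map_mul_norm_comm (hU : ∀ x y, ⟪x, y⟫_𝕜 = 0 → ⟪U x, U y⟫_𝕜 = 0) (x y : E) :
    ‖U x‖ * ‖y‖ = ‖U y‖ * ‖x‖ := by
  by_cases hxy : ⟪x, y⟫_𝕜 = 0
  · by_cases hx0 : x = 0
    · simp [hx0]
    by_cases hy0 : y = 0
    · simp [hy0]
    have hx : ⟪x, x + y⟫_𝕜 ≠ 0 := by simpa [inner_add_right, hxy] using hx0
    have hy : ⟪x + y, y⟫_𝕜 ≠ 0 := by simpa [inner_add_left, hxy] using hy0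
    have hsum : ‖x + y‖ ≠ 0 := by
      intro h
      rw [norm_eq_zero] at h
      simp [h] at hx
    have h1 := norm_map_mul_norm_of_inner_ne_zero hU hx
    have h2 := norm_map_mul_norm_of_inner_ne_zero hU hy
    refine mul_right_cancel₀ hsum ?_
    linear_combination ‖y‖ * h1 + ‖x‖ * h2
  · exact norm_map_mul_norm_of_inner_ne_zero hU hxy

theorem exists_linearIsometryEquiv_of_inner_map_eq_zero {σ' : 𝕜 →+* 𝕜} [RingHomInvPair σ σ']
    [RingHomInvPair σ' σ] (hU : ∀ x y, ⟪x, y⟫_𝕜 = 0 → ⟪U x, U y⟫_𝕜 = 0)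
    (hU0 : U ≠ 0) (hsurj : Function.Surjective U) :
    ∃ V : E ≃ₛₗᵢ[σ] F, ∀ x, 𝕜 ∙ V x = 𝕜 ∙ U x := by
  obtain ⟨x₀, hx₀⟩ : ∃ x₀, U x₀ ≠ 0 := DFunLike.ne_iff.1 hU0
  have hx₀' : x₀ ≠ 0 := by
    rintro rfl
    exact hx₀ (map_zero U)
  let c : 𝕜 := ((‖x₀‖ / ‖U x₀‖ : ℝ) : 𝕜)
  have hc : c ≠ 0 := by simp [c, hx₀, hx₀']
  let V : E →ₛₗᵢ[σ] F :=
    { toLinearMap := c • U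
      norm_map' := fun x ↦ by
        have hUx₀ : ‖U x₀‖ ≠ 0 := norm_ne_zero_iff.2 hx₀
        simp only [LinearMap.smul_apply, norm_smul, c, RCLike.norm_ofReal, abs_div, abs_norm]
        rw [div_mul_eq_mul_div, div_eq_iff hUx₀, mul_comm, norm_map_mul_norm_comm hU, mul_comm] }
  have hV : Function.Surjective V := fun w ↦ (hsurj (c⁻¹ • w)).imp fun x hx ↦ by
    rw [← smul_inv_smul₀ hc w, ← hx]
    rfl
  exact ⟨LinearIsometryEquiv.ofSurjective V hV, fun x ↦ span_singleton_smul_eq hc.isUnit (U x)⟩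

end SemilinearMap

theorem inner_eq_zero_congr_span {x x' y y' : E} (hx : 𝕜 ∙ x = 𝕜 ∙ x') (hy : 𝕜 ∙ y = 𝕜 ∙ y') :
    ⟪x, y⟫_𝕜 = 0 ↔ ⟪x', y'⟫_𝕜 = 0 := by
  rw [← mem_orthogonal_singleton_iff_inner_right, ← mem_orthogonal_singleton_iff_inner_right, hx,
    ← span_singleton_le_iff_mem, hy, span_singleton_le_iff_mem]

theorem mem_span_pair_iff_forall_inner_eq_zero {x a b : E} :
    x ∈ span 𝕜 {a, b} ↔ ∀ z, ⟪z, a⟫_𝕜 = 0 → ⟪z, b⟫_𝕜 = 0 → ⟪z, x⟫_𝕜 = 0 := by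
  have : FiniteDimensional 𝕜 (span 𝕜 {a, b}) := FiniteDimensional.span_of_finite 𝕜 (Set.toFinite _)
  have hperp (z : E) : z ∈ (span 𝕜 {a, b})ᗮ ↔ ⟪z, a⟫_𝕜 = 0 ∧ ⟪z, b⟫_𝕜 = 0 := by
    simp [span_insert, ← inf_orthogonal, mem_orthogonal_singleton_iff_inner_left]
  rw [← orthogonal_orthogonal (span 𝕜 {a, b}), mem_orthogonal]
  simp only [hperp, and_imp]

theorem isProjectiveEmbedding_of_inner_eq_zero_iff {g : E → F}
    (hg : ∀ x y, ⟪x, y⟫_𝕜 = 0 ↔ ⟪g x, g y⟫_𝕜 = 0) (hsurj : ∀ w, ∃ x, 𝕜 ∙ g x = 𝕜 ∙ w) :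
    IsProjectiveEmbedding 𝕜 𝕜 g where
  map_zero := inner_self_eq_zero.1 ((hg 0 0).1 (inner_zero_left 0))
  mem_span_pair_iff x a b := by
    simp only [mem_span_pair_iff_forall_inner_eq_zero, hg]
    refine ⟨fun h z ↦ h (g z), fun h w ↦ ?_⟩
    obtain ⟨z, hz⟩ := hsurj w
    have hzw (v : F) : ⟪g z, v⟫_𝕜 = 0 ↔ ⟪w, v⟫_𝕜 = 0 := inner_eq_zero_congr_span hz rfl
    simpa only [hzw] using h z

/-- **Uhlhorn's theorem**. -/
theorem exists_linearIsometryEquiv_span_eq_or_conj {g : E → F} (hE : 3 ≤ Module.rank 𝕜 E)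
    (hg : ∀ x y, ⟪x, y⟫_𝕜 = 0 ↔ ⟪g x, g y⟫_𝕜 = 0) (hsurj : ∀ w, ∃ x, 𝕜 ∙ g x = 𝕜 ∙ w) :
    (∃ U : E ≃ₗᵢ[𝕜] F, ∀ x, 𝕜 ∙ U x = 𝕜 ∙ g x) ∨ ∃ U : E ≃ₗᵢ⋆[𝕜] F, ∀ x, 𝕜 ∙ U x = 𝕜 ∙ g x := by
  obtain ⟨σ, U, hU⟩ :=
    (isProjectiveEmbedding_of_inner_eq_zero_iff hg hsurj).exists_semilinearMap hE
  have horth (x y : E) : ⟪x, y⟫_𝕜 = 0 ↔ ⟪U x, U y⟫_𝕜 = 0 :=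
    (hg x y).trans (inner_eq_zero_congr_span (hU x) (hU y)).symm
  have hUsurj (w : F) : ∃ x, 𝕜 ∙ U x = 𝕜 ∙ w := by simpa only [hU] using hsurj w
  obtain ⟨v, hv⟩ := exists_orthonormal_of_le_rank (𝕜 := 𝕜) (E := E) (n := 2)
    (le_trans (by norm_num) hE)
  have hv0 : U (v 0) ≠ 0 := by
    rw [← inner_self_ne_zero (𝕜 := 𝕜), Ne, ← horth, inner_self_eq_zero]
    exact hv.ne_zero 0
  have hU0 : U ≠ 0 := fun h ↦ hv0 (by rw [h, LinearMap.zero_apply])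
  have hσ := map_conj_of_inner_map_eq_zero (fun x y ↦ (horth x y).1) (hv.2 zero_ne_one)
    ((hv.1 0).trans (hv.1 1).symm) hv0
  rcases ringHom_eq_id_or_conj_of_map_conj hσ with rfl | rfl
  · obtain ⟨V, hV⟩ := exists_linearIsometryEquiv_of_inner_map_eq_zero (fun x y ↦ (horth x y).1)
      hU0 (surjective_of_forall_exists_span_eq hUsurj)
    exact .inl ⟨V, fun x ↦ (hV x).trans (hU x)⟩
  · obtain ⟨V, hV⟩ := exists_linearIsometryEquiv_of_inner_map_eq_zero (fun x y ↦ (horth x y).1)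
      hU0 (surjective_of_forall_exists_span_eq hUsurj)
    exact .inr ⟨V, fun x ↦ (hV x).trans (hU x)⟩

theorem map_orthogonal_span_singleton {σ σ' : 𝕜 →+* 𝕜} [RingHomInvPair σ σ']
    [RingHomInvPair σ' σ] {U : E ≃ₛₗ[σ] F} (hU : ∀ x y, ⟪x, y⟫_𝕜 = 0 ↔ ⟪U x, U y⟫_𝕜 = 0) (x : E) :
    map (U : E →ₛₗ[σ] F) (𝕜 ∙ x)ᗮ = (𝕜 ∙ U x)ᗮ := by
  ext w
  obtain ⟨y, rfl⟩ := U.surjective w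
  rw [mem_orthogonal_singleton_iff_inner_right, ← hU, ← mem_orthogonal_singleton_iff_inner_right]
  exact U.injective.mem_set_image

end Uhlhorn

section OrthogonalComplement

open scoped InnerProductSpace

variable {𝕜 E F : Type*} [RCLike 𝕜] [NormedAddCommGroup E] [InnerProductSpace 𝕜 E]
  [NormedAddCommGroup F] [InnerProductSpace 𝕜 F]

theorem finrank_quotient_eq_one_iff (K : Submodule 𝕜 E) [K.HasOrthogonalProjection] :
    finrank 𝕜 (E ⧸ K) = 1 ↔ ∃ x ≠ 0, K = (𝕜 ∙ x)ᗮ := by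
  rw [(quotientEquivOfIsCompl K Kᗮ (isCompl_orthogonal K)).finrank_eq]
  constructor
  · intro h
    obtain ⟨⟨x, hx⟩, hx0, hspan⟩ := finrank_eq_one_iff'.1 h
    have hKx : Kᗮ = 𝕜 ∙ x := by
      refine le_antisymm (fun w hw ↦ ?_) ((span_singleton_le_iff_mem _ _).2 hx)
      exact mem_span_singleton.2 ((hspan ⟨w, hw⟩).imp fun c hc ↦ congrArg Subtype.val hc)
    exact ⟨x, fun h0 ↦ hx0 (Subtype.ext h0), by rw [← hKx, orthogonal_orthogonal]⟩
  · rintro ⟨x, hx, rfl⟩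
    rw [orthogonal_orthogonal, finrank_span_singleton hx]

theorem comap_subtype_inf_orthogonal_span_singleton (X : Submodule 𝕜 E) (x : X) :
    (X ⊓ (𝕜 ∙ (x : E))ᗮ).comap X.subtype = (𝕜 ∙ x)ᗮ := by
  ext y
  simp [mem_orthogonal_singleton_iff_inner_right]

theorem map_subtype_orthogonal_span_singleton (X : Submodule 𝕜 E) (x : X) :
    (𝕜 ∙ x)ᗮ.map X.subtype = X ⊓ (𝕜 ∙ (x : E))ᗮ := by
  rw [← comap_subtype_inf_orthogonal_span_singleton, map_comap_subtype, ← inf_assoc, inf_idem]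

theorem map_subtype_map_comap_inf_orthogonal {σ σ' : 𝕜 →+* 𝕜} [RingHomInvPair σ σ']
    [RingHomInvPair σ' σ] {X : Submodule 𝕜 E} {X' : Submodule 𝕜 F} {U : X ≃ₛₗ[σ] X'}
    (hU : ∀ x y, ⟪x, y⟫_𝕜 = 0 ↔ ⟪U x, U y⟫_𝕜 = 0) (x : X) :
    ((X ⊓ (𝕜 ∙ (x : E))ᗮ).comap X.subtype |>.map (U : X →ₛₗ[σ] X')).map X'.subtype =
      X' ⊓ (𝕜 ∙ (U x : F))ᗮ := by
  rw [comap_subtype_inf_orthogonal_span_singleton, map_orthogonal_span_singleton hU,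
    map_subtype_orthogonal_span_singleton]

theorem span_eq_span_of_inf_orthogonal_eq {X : Submodule 𝕜 E} {x y : X}
    (h : X ⊓ (𝕜 ∙ (x : E))ᗮ = X ⊓ (𝕜 ∙ (y : E))ᗮ) : 𝕜 ∙ x = 𝕜 ∙ y := by
  rw [← orthogonal_orthogonal (𝕜 ∙ x), ← comap_subtype_inf_orthogonal_span_singleton, h,
    comap_subtype_inf_orthogonal_span_singleton, orthogonal_orthogonal]

theorem isClosed_inf_orthogonal {X : Submodule 𝕜 E} (hX : IsClosed (X : Set E))
    (K : Submodule 𝕜 E) : IsClosed ((X ⊓ Kᗮ : Submodule 𝕜 E) : Set E) :=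
  hX.inter (isClosed_orthogonal K)

theorem starProjection_inf_orthogonal {K X : Submodule 𝕜 E} [K.HasOrthogonalProjection]
    [X.HasOrthogonalProjection] [(X ⊓ Kᗮ).HasOrthogonalProjection] (hKX : K ≤ X) :
    (X ⊓ Kᗮ).starProjection = X.starProjection - K.starProjection := by
  ext u
  have hX : u - X.starProjection u ∈ Xᗮ := sub_starProjection_mem_orthogonal u
  have hK : u - K.starProjection u ∈ Kᗮ := sub_starProjection_mem_orthogonal u
  refine eq_starProjection_of_mem_orthogonal ⟨?_, ?_⟩ ?_
  · exact sub_mem (starProjection_apply_mem X u) (hKX (starProjection_apply_mem K u))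
  · simpa using sub_mem hK (orthogonal_le hKX hX)
  · have hKmem : K.starProjection u ∈ (X ⊓ Kᗮ)ᗮ :=
      orthogonal_le inf_le_right (le_orthogonal_orthogonal K (starProjection_apply_mem K u))
    simpa [sub_add] using add_mem (orthogonal_le inf_le_left hX) hKmem

theorem commute_starProjection_of_le_s11 {K X : Submodule 𝕜 E} [K.HasOrthogonalProjection]
    [X.HasOrthogonalProjection] (hKX : K ≤ X) : Commute X.starProjection K.starProjection := by
  have hKX_mul : K.starProjection * X.starProjection = K.starProjection :=
    starProjection_comp_starProjection_of_le hKX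
  rw [commute_iff_eq, hKX_mul]
  ext u
  exact starProjection_eq_self_iff.2 (hKX (starProjection_apply_mem K u))

theorem commute_sub_sub_iff {R : Type*} [Ring R] {a b c : R} (hab : Commute a b)
    (hac : Commute a c) : Commute (a - b) (a - c) ↔ Commute b c := by
  have hsub {b c : R} (hab : Commute a b) (hac : Commute a c) (hbc : Commute b c) :
      Commute (a - b) (a - c) :=
    ((Commute.refl a).sub_right hac).sub_left (hab.symm.sub_right hbc)
  refine ⟨fun h ↦ ?_, hsub hab hac⟩
  simpa using hsub ((Commute.refl a).sub_right hab) ((Commute.refl a).sub_right hac) h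

theorem commute_starProjection_inf_orthogonal_iff {K L X : Submodule 𝕜 E}
    [K.HasOrthogonalProjection] [L.HasOrthogonalProjection] [X.HasOrthogonalProjection]
    [(X ⊓ Kᗮ).HasOrthogonalProjection] [(X ⊓ Lᗮ).HasOrthogonalProjection] (hK : K ≤ X)
    (hL : L ≤ X) :
    Commute (X ⊓ Kᗮ).starProjection (X ⊓ Lᗮ).starProjection ↔
      Commute K.starProjection L.starProjection := by
  rw [starProjection_inf_orthogonal hK, starProjection_inf_orthogonal hL]
  exact commute_sub_sub_iff (commute_starProjection_of_le_s11 hK) (commute_starProjection_of_le_s11 hL)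

theorem commute_starProjection_span_singleton_iff {x z : E} (hx : x ≠ 0) :
    Commute (𝕜 ∙ x).starProjection (𝕜 ∙ z).starProjection ↔ ⟪x, z⟫_𝕜 = 0 ∨ 𝕜 ∙ x = 𝕜 ∙ z := by
  constructor
  · intro hcomm
    rw [or_iff_not_imp_left]
    intro hxz
    have hfix : (𝕜 ∙ z).starProjection ((𝕜 ∙ x).starProjection z) = (𝕜 ∙ x).starProjection z := by
      have hPz : (𝕜 ∙ z).starProjection z = z :=
        starProjection_eq_self_iff.2 (mem_span_singleton_self z)
      simpa only [mul_apply_eq_comp, hPz] using (DFunLike.congr_fun hcomm.eq z).symm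
    have hxz_mem : x ∈ 𝕜 ∙ z := by
      have hmem := starProjection_eq_self_iff.1 hfix
      rw [starProjection_singleton] at hmem
      exact (smul_mem_iff _ (div_ne_zero hxz (by simpa using hx))).1 hmem
    obtain ⟨c, rfl⟩ := mem_span_singleton.1 hxz_mem
    exact span_singleton_smul_eq (left_ne_zero_of_smul hx).isUnit z
  · rintro (hxz | hspan)
    · have hortho : 𝕜 ∙ x ⟂ 𝕜 ∙ z := isOrtho_span.2 (by simpa using hxz)
      exact hortho.starProjection_comp_starProjection.trans
        hortho.symm.starProjection_comp_starProjection.symm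
    · exact commute_starProjection_of_le_s11 hspan.ge

end OrthogonalComplement

section Codimension

variable {E : Type*} [NormedAddCommGroup E] [InnerProductSpace ℂ E]

theorem not_codimIn_self_one (X : Submodule ℂ E) : ¬CodimIn X X 1 := by
  rintro ⟨-, -, h⟩
  rw [comap_subtype_self, finrank_zero_of_subsingleton] at h
  exact zero_ne_one h

theorem topSet_subset_Ginf {X : Submodule ℂ E} (hX : X ∈ Ginf) : topSet X ⊆ Ginf := by
  rintro M ⟨hM, hMX, hquot, -⟩
  refine ⟨hM, fun hfin ↦ hX.2.1 ?_, fun hfin ↦ hX.2.2 ?_⟩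
  · have : FiniteDimensional ℂ (M.comap X.subtype) :=
      (comapSubtypeEquivOfLe hMX).symm.finiteDimensional
    exact Module.Finite.of_submodule_quotient (M.comap X.subtype)
  · exact Submodule.finiteDimensional_of_le (orthogonal_le hMX)

end Codimension

section Hyperplanes

open scoped InnerProductSpace

theorem projCLM_eq_starProjection_s11 {X : Submodule ℂ H} [X.HasOrthogonalProjection]
    (hX : IsClosed (X : Set H)) : projCLM X = X.starProjection := by
  rw [projCLM, dif_pos hX]
  rfl

theorem codimIn_one_iff {W X : Submodule ℂ H} (hW : IsClosed (W : Set H))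
    (hX : IsClosed (X : Set H)) :
    CodimIn W X 1 ↔ ∃ x : X, x ≠ 0 ∧ W = X ⊓ (ℂ ∙ (x : H))ᗮ := by
  have : CompleteSpace X := hX.completeSpace_coe
  have hcomap : IsClosed ((W.comap X.subtype : Submodule ℂ X) : Set X) :=
    hW.preimage continuous_subtype_val
  have : CompleteSpace (W.comap X.subtype) := hcomap.completeSpace_coe
  constructor
  · rintro ⟨hWX, -, hrank⟩
    obtain ⟨x, hx, hWx⟩ := (finrank_quotient_eq_one_iff _).1 hrank
    refine ⟨x, hx, ?_⟩
    rw [← map_subtype_orthogonal_span_singleton, ← hWx, map_comap_subtype, inf_eq_right.2 hWX]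
  · rintro ⟨x, hx, rfl⟩
    have hrank := (finrank_quotient_eq_one_iff ((X ⊓ (ℂ ∙ (x : H))ᗮ).comap X.subtype)).2
      ⟨x, hx, comap_subtype_inf_orthogonal_span_singleton X x⟩
    exact ⟨inf_le_left, finite_of_finrank_eq_succ hrank, hrank⟩

theorem mem_topSet_iff {M X : Submodule ℂ H} (hX : IsClosed (X : Set H)) :
    M ∈ topSet X ↔ ∃ x : X, x ≠ 0 ∧ M = X ⊓ (ℂ ∙ (x : H))ᗮ := by
  constructor
  · exact fun hM ↦ (codimIn_one_iff hM.1 hX).1 hM.2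
  · rintro ⟨x, hx, rfl⟩
    have hclosed := isClosed_inf_orthogonal hX (ℂ ∙ (x : H))
    exact ⟨hclosed, (codimIn_one_iff hclosed hX).2 ⟨x, hx, rfl⟩⟩

theorem codimIn_inf_orthogonal_of_inner_eq_zero {X : Submodule ℂ H} (hX : IsClosed (X : Set H))
    {x z : H} (hzX : z ∈ X) (hz : z ≠ 0) (hxz : ⟪x, z⟫_ℂ = 0) :
    CodimIn (X ⊓ (ℂ ∙ x)ᗮ ⊓ (X ⊓ (ℂ ∙ z)ᗮ)) (X ⊓ (ℂ ∙ x)ᗮ) 1 := by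
  have hclosed := isClosed_inf_orthogonal hX (ℂ ∙ x)
  refine (codimIn_one_iff (hclosed.inter (isClosed_inf_orthogonal hX _)) hclosed).2
    ⟨⟨z, hzX, mem_orthogonal_singleton_iff_inner_right.2 hxz⟩, by simpa [Subtype.ext_iff], ?_⟩
  rw [← inf_assoc, inf_right_comm X _ X, inf_idem]

theorem compatible_inf_orthogonal_iff {X : Submodule ℂ H} (hX : IsClosed (X : Set H)) {x z : H}
    (hx : x ∈ X) (hz : z ∈ X) : Compatible (X ⊓ (ℂ ∙ x)ᗮ) (X ⊓ (ℂ ∙ z)ᗮ) ↔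
      Commute (ℂ ∙ x).starProjection (ℂ ∙ z).starProjection := by
  have : CompleteSpace X := hX.completeSpace_coe
  have hclosed (v : H) := isClosed_inf_orthogonal hX (ℂ ∙ v)
  have (v : H) : CompleteSpace (X ⊓ (ℂ ∙ v)ᗮ : Submodule ℂ H) := (hclosed v).completeSpace_coe
  rw [Compatible, projCLM_eq_starProjection_s11 (hclosed x), projCLM_eq_starProjection_s11 (hclosed z)]
  exact commute_starProjection_inf_orthogonal_iff ((span_singleton_le_iff_mem _ _).2 hx)
    ((span_singleton_le_iff_mem _ _).2 hz)

theorem orthoAdjacent_inf_orthogonal_iff {X : Submodule ℂ H} (hX : IsClosed (X : Set H)) {x z : X}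
    (hx : x ≠ 0) (hz : z ≠ 0) :
    OrthoAdjacent (X ⊓ (ℂ ∙ (x : H))ᗮ) (X ⊓ (ℂ ∙ (z : H))ᗮ) ↔ ⟪x, z⟫_ℂ = 0 := by
  have hx' : (x : H) ≠ 0 := by simpa using hx
  have hz' : (z : H) ≠ 0 := by simpa using hz
  rw [OrthoAdjacent, compatible_inf_orthogonal_iff hX x.2 z.2,
    commute_starProjection_span_singleton_iff hx', coe_inner]
  constructor
  · rintro ⟨⟨hcodim, -⟩, hxz | hspan⟩
    · exact hxz
    · rw [hspan, inf_idem] at hcodim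
      exact absurd hcodim (not_codimIn_self_one _)
  · intro hxz
    refine ⟨⟨codimIn_inf_orthogonal_of_inner_eq_zero hX z.2 hz' hxz, ?_⟩, .inl hxz⟩
    rw [inf_comm]
    exact codimIn_inf_orthogonal_of_inner_eq_zero hX x.2 hx' (inner_eq_zero_symm.1 hxz)

end Hyperplanes

section Top

open scoped InnerProductSpace

theorem exists_map_inf_orthogonal_eq {f : Submodule ℂ H → Submodule ℂ H} {X X' : Submodule ℂ H}
    (hX : IsClosed (X : Set H)) (hX' : IsClosed (X' : Set H))
    (hf : Set.MapsTo f (topSet X) (topSet X')) :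
    ∃ g : X → X', g 0 = 0 ∧ ∀ x ≠ 0,
      g x ≠ 0 ∧ f (X ⊓ (ℂ ∙ (x : H))ᗮ) = X' ⊓ (ℂ ∙ (g x : H))ᗮ := by
  have hex (x : X) (hx : x ≠ 0) : ∃ y : X', y ≠ 0 ∧
      f (X ⊓ (ℂ ∙ (x : H))ᗮ) = X' ⊓ (ℂ ∙ (y : H))ᗮ :=
    (mem_topSet_iff hX').1 (hf ((mem_topSet_iff hX).2 ⟨x, hx, rfl⟩))
  choose g hg using hex
  refine ⟨fun x ↦ if hx : x = 0 then 0 else g x hx, dif_pos rfl, fun x hx ↦ ?_⟩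
  simpa only [dif_neg hx] using hg x hx

theorem eq_map_of_mem_topSet {σ σ' : ℂ →+* ℂ} [RingHomInvPair σ σ'] [RingHomInvPair σ' σ]
    {f : Submodule ℂ H → Submodule ℂ H} {X X' : Submodule ℂ H} {g : X → X'} {U : X ≃ₛₗ[σ] X'}
    (hX : IsClosed (X : Set H)) (horth : ∀ x y, ⟪x, y⟫_ℂ = 0 ↔ ⟪g x, g y⟫_ℂ = 0)
    (hfg : ∀ x : X, x ≠ 0 → f (X ⊓ (ℂ ∙ (x : H))ᗮ) = X' ⊓ (ℂ ∙ (g x : H))ᗮ)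
    (hU : ∀ x, ℂ ∙ U x = ℂ ∙ g x) {M : Submodule ℂ H} (hM : M ∈ topSet X) :
    f M = ((M.comap X.subtype).map (U : X →ₛₗ[σ] X')).map X'.subtype := by
  obtain ⟨x, hx, rfl⟩ := (mem_topSet_iff hX).1 hM
  have hU_orth (x y : X) : ⟪x, y⟫_ℂ = 0 ↔ ⟪U x, U y⟫_ℂ = 0 :=
    (horth x y).trans (inner_eq_zero_congr_span (hU x) (hU y)).symm
  rw [hfg x hx, map_subtype_map_comap_inf_orthogonal hU_orth,
    ← map_subtype_orthogonal_span_singleton, ← map_subtype_orthogonal_span_singleton, hU]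

theorem stmt11_general {f : Submodule ℂ H → Submodule ℂ H} {X X' : Submodule ℂ H}
    (hX : IsClosed (X : Set H)) (hX' : IsClosed (X' : Set H)) (hrank : 3 ≤ Module.rank ℂ X)
    (hf : ∀ M ∈ topSet X, ∀ N ∈ topSet X, OrthoAdjacent M N ↔ OrthoAdjacent (f M) (f N))
    (htop : f '' topSet X = topSet X') :
    (∃ U : X ≃ₗᵢ[ℂ] X', ∀ M ∈ topSet X, f M = imL X X' U M) ∨
    (∃ U : X ≃ₗᵢ⋆[ℂ] X', ∀ M ∈ topSet X, f M = imC X X' U M) := by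
  obtain ⟨g, hg0, hg⟩ := exists_map_inf_orthogonal_eq hX hX' (Set.mapsTo_iff_image_subset.2 htop.le)
  have horth (x y : X) : ⟪x, y⟫_ℂ = 0 ↔ ⟪g x, g y⟫_ℂ = 0 := by
    by_cases hx : x = 0
    · simp [hx, hg0]
    by_cases hy : y = 0
    · simp [hy, hg0]
    rw [← orthoAdjacent_inf_orthogonal_iff hX hx hy,
      ← orthoAdjacent_inf_orthogonal_iff hX' (hg x hx).1 (hg y hy).1, ← (hg x hx).2, ← (hg y hy).2]
    exact hf _ ((mem_topSet_iff hX).2 ⟨x, hx, rfl⟩) _ ((mem_topSet_iff hX).2 ⟨y, hy, rfl⟩)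
  have hsurj (w : X') : ∃ x, ℂ ∙ g x = ℂ ∙ w := by
    by_cases hw : w = 0
    · exact ⟨0, by rw [hw, hg0]⟩
    obtain ⟨M, hM, hMw⟩ := htop.ge ((mem_topSet_iff hX').2 ⟨w, hw, rfl⟩)
    obtain ⟨x, hx, rfl⟩ := (mem_topSet_iff hX).1 hM
    exact ⟨x, span_eq_span_of_inf_orthogonal_eq ((hg x hx).2.symm.trans hMw)⟩
  rcases exists_linearIsometryEquiv_span_eq_or_conj hrank horth hsurj with ⟨U, hU⟩ | ⟨U, hU⟩
  · exact .inl ⟨U, fun M ↦ eq_map_of_mem_topSet hX horth (fun x hx ↦ (hg x hx).2) hU⟩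
  · exact .inr ⟨U, fun M ↦ eq_map_of_mem_topSet hX horth (fun x hx ↦ (hg x hx).2) hU⟩

end Top

/-- if a bijective transformation `f` of `G_∞(H)` preserves ortho-adjacency in
both directions and maps the top `G¹(X)` onto the top `G¹(X')`, then there is a unitary or
anti-unitary operator `U : X → X'` with `f M = U(M)` for every `M ∈ G¹(X)`. -/
theorem stmt11 (hH : ¬FiniteDimensional ℂ H)
    (f : Submodule ℂ H → Submodule ℂ H)
    (hbij : Set.BijOn f (Ginf (H := H)) (Ginf (H := H)))
    (hf : ∀ X ∈ Ginf (H := H), ∀ Y ∈ Ginf (H := H),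
      OrthoAdjacent X Y ↔ OrthoAdjacent (f X) (f Y))
    (X X' : Submodule ℂ H) (hX : X ∈ Ginf (H := H)) (hX' : X' ∈ Ginf (H := H))
    (htop : f '' topSet X = topSet X') :
    (∃ U : ↥X ≃ₗᵢ[ℂ] ↥X', ∀ M ∈ topSet X, f M = imL X X' U M) ∨
    (∃ U : ↥X ≃ₗᵢ⋆[ℂ] ↥X', ∀ M ∈ topSet X, f M = imC X X' U M) := by
  have hrank : 3 ≤ Module.rank ℂ X :=
    Cardinal.ofNat_le_aleph0.trans (not_lt.1 fun h ↦ hX.2.1 (rank_lt_aleph0_iff.1 h))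
  exact stmt11_general hX.1 hX'.1 hrank
    (fun M hM N hN ↦ hf M (topSet_subset_Ginf hX hM) N (topSet_subset_Ginf hX hN)) htop
end
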